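/- Let m ≥ 1, x ∈ (0,1), let a be real, b > 0, let β, α be nonnegative integers, and let θ₁ < θ₂ < ⋯ < θ_m be distinct real numbers. Then the integral over the ordered region {0 < y₁ < ⋯ < y_m < x} of ∏_{k=1}^m y_k^{β}(1−y_k)^{α} · ∏_{1≤i<j≤m}(y_j − y_i) · det[₁F₁(a; b; θ_j y_i)]_{i,j=1,…,m} with respect to dy₁⋯dy_m equals det[ φ_i(x, θ_j) ]_{i,j=1,…,m}, where φ_i(x, θ_j) = ∫₀ˣ y^{β+i−1}(1−y)^{α} ₁F₁(a; b; θ_j y) dy. -/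

import Mathlib

open MeasureTheory Finset

/-- The rising factorial `(a)_k = a(a+1)⋯(a+k−1)`, with `(a)_0 = 1`. -/
noncomputable def risingFactorial (a : ℝ) (k : ℕ) : ℝ :=
  ∏ i ∈ Finset.range k, (a + i)

/-- The confluent hypergeometric function `₁F₁(a; b; z) = ∑ (a)_k/((b)_k k!) z^k`. -/
noncomputable def oneF1 (a b z : ℝ) : ℝ :=
  ∑' k : ℕ, risingFactorial a k / (risingFactorial b k * (k.factorial : ℝ)) * z ^ k

/-!
Almost every tuple has distinct coordinates, so the `m!` permutations of the coordinates carry the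
ordered region onto disjoint pieces which together fill `(0, x)ᵐ` up to a null set. Expanding the
first factor of `det[g_j(y_i)] · det[f_j(y_i)]` by Leibniz writes this product as the sum of
`∏ g_i(y_i) · det[f_j(y_i)]` over all reorderings of `y`; hence its integral over the ordered region
is the integral of that single term over the whole cube, which splits into one-dimensional integrals
and gives `det[∫ g_i f_j]`. The weight and the Vandermonde product combine into `det[g_j(y_i)]` with
`g_j(t) = t^β (1 - t)^α t^j`.
-/

section OrderChambers

variable {n : ℕ} {X : Type*} [LinearOrder X]

/-- The tuples that the permutation `σ` arranges in increasing order. These chambers cut the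
injective tuples of `Xⁿ` into `n!` disjoint pieces, permuted simply transitively by the action
of the symmetric group on the coordinates. -/
def orderChamber (σ : Equiv.Perm (Fin n)) : Set (Fin n → X) :=
  {y | StrictMono (y ∘ σ)}

lemma injective_of_mem_orderChamber {σ : Equiv.Perm (Fin n)} {y : Fin n → X}
    (hy : y ∈ orderChamber σ) : Function.Injective y :=
  (Equiv.injective_comp σ y).mp (StrictMono.injective hy)

lemma iUnion_orderChamber :
    ⋃ σ : Equiv.Perm (Fin n), orderChamber σ = {y : Fin n → X | Function.Injective y} := by
  refine subset_antisymm (Set.iUnion_subset fun σ y => injective_of_mem_orderChamber)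
    fun y hy => Set.mem_iUnion.mpr ⟨Tuple.sort y, ?_⟩
  exact (Tuple.monotone_sort y).strictMono_of_injective (hy.comp (Tuple.sort y).injective)

lemma pairwise_disjoint_orderChamber :
    Pairwise (Function.onFun Disjoint
      (orderChamber : Equiv.Perm (Fin n) → Set (Fin n → X))) := by
  intro σ τ hστ
  refine Set.disjoint_left.mpr fun y hσ hτ => hστ ?_
  have hcomp : y ∘ σ = y ∘ τ :=
    Tuple.unique_monotone (StrictMono.monotone hσ) (StrictMono.monotone hτ)
  exact DFunLike.coe_injective ((injective_of_mem_orderChamber hσ).comp_left hcomp)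

variable [TopologicalSpace X] [OrderClosedTopology X] [SecondCountableTopology X]
  [MeasurableSpace X] [OpensMeasurableSpace X]

lemma measurableSet_orderChamber (σ : Equiv.Perm (Fin n)) :
    MeasurableSet (orderChamber σ : Set (Fin n → X)) := by
  simp only [orderChamber, StrictMono, Set.ofPred_forall]
  exact .iInter fun i => .iInter fun j => .iInter fun _ =>
    measurableSet_lt (measurable_pi_apply (σ i)) (measurable_pi_apply (σ j))

lemma measurableSet_setOf_strictMono : MeasurableSet {y : Fin n → X | StrictMono y} :=
  measurableSet_orderChamber 1

end OrderChambers

section PiMeasure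

variable {ι X : Type*} [MeasurableSpace X]

lemma measurableEmbedding_comp_perm (σ : Equiv.Perm ι) :
    MeasurableEmbedding fun y : ι → X => y ∘ σ :=
  (MeasurableEquiv.arrowCongr' σ.symm (MeasurableEquiv.refl X)).measurableEmbedding

variable [Fintype ι]

lemma measurePreserving_comp_perm (ν : Measure X) [SigmaFinite ν] (σ : Equiv.Perm ι) :
    MeasurePreserving (fun y : ι → X => y ∘ σ)
      (Measure.pi fun _ => ν) (Measure.pi fun _ => ν) :=
  measurePreserving_arrowCongr' (fun _ => ν) (fun _ => ν) σ.symm (MeasurableEquiv.refl X)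
    fun _ => MeasurePreserving.id ν

variable [MeasurableEq X] (ν : ι → Measure X) [∀ i, SigmaFinite (ν i)]

lemma ae_ne_pi {i j : ι} [NullSingletonClass (ν i)] (hij : i ≠ j) :
    ∀ᵐ y ∂Measure.pi ν, y i ≠ y j := by
  classical
  have hmeas : MeasurableSet {y : ι → X | y i = y j} :=
    measurableSet_eq_fun (measurable_pi_apply i) (measurable_pi_apply j)
  have hslice (y : ι → X) :
      ∫⁻ t, {y : ι → X | y i = y j}.indicator 1 (Function.update y i t) ∂ν i = 0 := by
    refine (lintegral_congr_ae ?_).trans lintegral_zero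
    filter_upwards [compl_mem_ae_iff.mpr (measure_singleton (μ := ν i) (y j))] with t ht
    simpa [hij.symm] using ht
  rcases isEmpty_or_nonempty (ι → X) with hempty | ⟨⟨y₀⟩⟩
  · exact .of_forall hempty.elim
  simp only [ne_eq, ae_iff, not_not]
  rw [← lintegral_indicator_one hmeas, lintegral_eq_lmarginal_univ y₀,
    lmarginal_erase' _ (measurable_one.indicator hmeas) (Finset.mem_univ i)]
  simp only [hslice]
  simp [lmarginal]

lemma ae_injective_pi [∀ i, NullSingletonClass (ν i)] :
    ∀ᵐ y ∂Measure.pi ν, Function.Injective y := by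
  have hne : ∀ᵐ y ∂Measure.pi ν, ∀ i j, i ≠ j → y i ≠ y j := by
    simp only [Filter.eventually_all]
    exact fun i j => ae_ne_pi ν
  filter_upwards [hne] with y hy i j
  exact not_imp_not.mp (hy i j)

end PiMeasure

section Andreief

lemma sum_perm_prod_mul_det_submatrix {ι R : Type*} [Fintype ι] [DecidableEq ι] [CommRing R]
    (A B : Matrix ι ι R) :
    ∑ σ : Equiv.Perm ι, (∏ i, A (σ i) i) * (B.submatrix σ id).det = A.det * B.det := by
  simp only [Matrix.det_permute, Matrix.det_apply' A, Finset.sum_mul]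
  exact Finset.sum_congr rfl fun σ _ => by ring

lemma prod_mul_det_eq_sum_perm {ι X R : Type*} [Fintype ι] [DecidableEq ι] [CommRing R]
    (f g : ι → X → R) (y : ι → X) :
    (∏ i, g i (y i)) * Matrix.det (Matrix.of fun i j => f j (y i)) =
      ∑ σ : Equiv.Perm ι, (Equiv.Perm.sign σ : R) * ∏ i, g i (y i) * f (σ i) (y i) := by
  rw [← Matrix.det_transpose, Matrix.det_apply', Finset.mul_sum]
  refine Finset.sum_congr rfl fun σ _ => ?_
  simp only [Matrix.transpose_apply, Matrix.of_apply, Finset.prod_mul_distrib]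
  ring

variable {X 𝕜 : Type*} [MeasurableSpace X] [RCLike 𝕜] {ν : Measure X} [SigmaFinite ν]

section Unordered

variable {ι : Type*} [Fintype ι] [DecidableEq ι] {f g : ι → X → 𝕜}

lemma integrable_sign_mul_prod_perm (hfg : ∀ i j, Integrable (fun t => g i t * f j t) ν)
    (σ : Equiv.Perm ι) :
    Integrable (fun y : ι → X => (Equiv.Perm.sign σ : 𝕜) * ∏ i, g i (y i) * f (σ i) (y i))
      (Measure.pi fun _ => ν) :=
  (Integrable.fintype_prod (f := fun i t => g i t * f (σ i) t)
    fun i => hfg i (σ i)).const_mul _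

lemma integrable_prod_mul_det (hfg : ∀ i j, Integrable (fun t => g i t * f j t) ν) :
    Integrable (fun y : ι → X => (∏ i, g i (y i)) * Matrix.det (Matrix.of fun i j => f j (y i)))
      (Measure.pi fun _ => ν) := by
  simp only [prod_mul_det_eq_sum_perm]
  exact integrable_finsetSum _ fun σ _ => integrable_sign_mul_prod_perm hfg σ

lemma integral_prod_mul_det (hfg : ∀ i j, Integrable (fun t => g i t * f j t) ν) :
    ∫ y : ι → X, (∏ i, g i (y i)) * Matrix.det (Matrix.of fun i j => f j (y i))
        ∂Measure.pi (fun _ => ν) =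
      Matrix.det (Matrix.of fun i j => ∫ t, g i t * f j t ∂ν) := by
  simp only [prod_mul_det_eq_sum_perm]
  rw [integral_finsetSum _ fun σ _ => integrable_sign_mul_prod_perm hfg σ,
    ← Matrix.det_transpose, Matrix.det_apply']
  refine Finset.sum_congr rfl fun σ _ => ?_
  rw [integral_const_mul, integral_fintype_prod_eq_prod fun i t => g i t * f (σ i) t]
  rfl

end Unordered

variable [LinearOrder X] [TopologicalSpace X] [OrderClosedTopology X]
  [SecondCountableTopology X] [OpensMeasurableSpace X] [NullSingletonClass ν] {n : ℕ}

theorem setIntegral_strictMono_sum_perm {E : Type*} [NormedAddCommGroup E] [NormedSpace ℝ E]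
    {G : (Fin n → X) → E} (hG : Integrable G (Measure.pi fun _ => ν)) :
    ∫ y in {y | StrictMono y}, ∑ σ : Equiv.Perm (Fin n), G (y ∘ σ) ∂Measure.pi (fun _ => ν) =
      ∫ y, G y ∂Measure.pi fun _ => ν := by
  have hcover : ⋃ σ : Equiv.Perm (Fin n), orderChamber σ
      =ᵐ[Measure.pi fun _ => ν] (Set.univ : Set (Fin n → X)) := by
    rw [iUnion_orderChamber]
    exact Filter.eventuallyEq_univ.mpr (ae_injective_pi fun _ => ν)
  have hpreimage (σ : Equiv.Perm (Fin n)) :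
      (fun y : Fin n → X => y ∘ σ) ⁻¹' orderChamber σ⁻¹ = {y | StrictMono y} := by
    ext y
    simp [orderChamber, Function.comp_assoc]
  calc ∫ y in {y | StrictMono y}, ∑ σ : Equiv.Perm (Fin n), G (y ∘ σ) ∂Measure.pi (fun _ => ν)
    _ = ∑ σ : Equiv.Perm (Fin n),
          ∫ y in {y | StrictMono y}, G (y ∘ σ) ∂Measure.pi (fun _ => ν) :=
        integral_finsetSum _ fun σ _ =>
          ((measurePreserving_comp_perm ν σ).integrable_comp_of_integrable hG).integrableOn
    _ = ∑ σ : Equiv.Perm (Fin n), ∫ y in orderChamber σ⁻¹, G y ∂Measure.pi (fun _ => ν) :=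
        Finset.sum_congr rfl fun σ _ => by
          rw [← hpreimage σ, (measurePreserving_comp_perm ν σ).setIntegral_preimage_emb
            (measurableEmbedding_comp_perm σ)]
    _ = ∑ σ : Equiv.Perm (Fin n), ∫ y in orderChamber σ, G y ∂Measure.pi (fun _ => ν) :=
        Equiv.sum_comp (Equiv.inv (Equiv.Perm (Fin n)))
          fun σ => ∫ y in orderChamber σ, G y ∂Measure.pi (fun _ => ν)
    _ = ∫ y, G y ∂Measure.pi fun _ => ν := by
        rw [← integral_iUnion_fintype measurableSet_orderChamber pairwise_disjoint_orderChamber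
          fun σ => hG.integrableOn, setIntegral_congr_set hcover, setIntegral_univ]

/-- Andréief's identity, in the form where integrating over ordered tuples only absorbs the factor
`n!` of the integral over all tuples. -/
theorem setIntegral_strictMono_det_mul_det {f g : Fin n → X → 𝕜}
    (hfg : ∀ i j, Integrable (fun t => g i t * f j t) ν) :
    ∫ y in {y : Fin n → X | StrictMono y}, Matrix.det (Matrix.of fun i j => g j (y i)) *
        Matrix.det (Matrix.of fun i j => f j (y i)) ∂Measure.pi (fun _ => ν) =
      Matrix.det (Matrix.of fun i j => ∫ t, g i t * f j t ∂ν) := by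
  rw [← integral_prod_mul_det hfg, ← setIntegral_strictMono_sum_perm (integrable_prod_mul_det hfg)]
  exact integral_congr_ae (.of_forall fun y => (sum_perm_prod_mul_det_submatrix
    (Matrix.of fun i j => g j (y i)) (Matrix.of fun i j => f j (y i))).symm)

theorem setIntegral_strictMono_prod_mul_det_vandermonde_mul_det {s : Set X} {w v : X → 𝕜}
    {f : Fin n → X → 𝕜}
    (hf : ∀ i j : Fin n, IntegrableOn (fun t => w t * v t ^ (i : ℕ) * f j t) s ν) :
    ∫ y in {y : Fin n → X | StrictMono y ∧ ∀ k, y k ∈ s},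
        (∏ k, w (y k)) * (Matrix.vandermonde fun k => v (y k)).det *
          Matrix.det (Matrix.of fun i j => f j (y i)) ∂Measure.pi (fun _ => ν) =
      Matrix.det (Matrix.of fun i j : Fin n => ∫ t in s, w t * v t ^ (i : ℕ) * f j t ∂ν) := by
  have hregion : {y : Fin n → X | StrictMono y ∧ ∀ k, y k ∈ s} =
      {y | StrictMono y} ∩ Set.univ.pi fun _ => s := by
    ext y
    simp [Set.mem_pi]
  rw [← setIntegral_strictMono_det_mul_det hf, hregion,
    ← Measure.restrict_restrict measurableSet_setOf_strictMono, Measure.restrict_pi_pi]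
  simp only [← Matrix.det_mul_column, Matrix.vandermonde_apply]

end Andreief

section ConfluentHypergeometric

lemma risingFactorial_succ (a : ℝ) (k : ℕ) :
    risingFactorial a (k + 1) = risingFactorial a k * (a + k) :=
  Finset.prod_range_succ _ k

/-- The Taylor coefficient `(a)_k / ((b)_k k!)` of `oneF1 a b` at `0`, in which form the ratio test
for power series applies. When `b` is a nonpositive integer, `x / 0 = 0` makes the coefficients
past the pole vanish. -/
noncomputable def oneF1Coeff (a b : ℝ) (k : ℕ) : ℝ :=
  risingFactorial a k / (risingFactorial b k * (k.factorial : ℝ))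

lemma oneF1Coeff_succ (a b : ℝ) (k : ℕ) :
    oneF1Coeff a b (k + 1) = oneF1Coeff a b k * ((a + k) / (b + k) * (1 / (k + 1))) := by
  simp only [oneF1Coeff, risingFactorial_succ, Nat.factorial_succ, Nat.cast_mul, Nat.cast_succ,
    div_eq_mul_inv, mul_inv]
  ring

lemma tendsto_oneF1Coeff_ratio (a b : ℝ) :
    Filter.Tendsto (fun k : ℕ => (a + k) / (b + k) * (1 / ((k : ℝ) + 1)))
      Filter.atTop (nhds 0) := by
  simpa using (tendsto_add_mul_div_add_mul_atTop_nhds a b 1 one_ne_zero).mul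
    tendsto_one_div_add_atTop_nhds_zero_nat

lemma radius_ofScalars_oneF1Coeff (a b : ℝ) :
    (FormalMultilinearSeries.ofScalars ℝ (oneF1Coeff a b)).radius = ⊤ := by
  rw [← ENNReal.inv_zero]
  refine FormalMultilinearSeries.ofScalars_radius_eq_inv_of_tendsto_ENNReal ℝ _ ?_
  have hlim := ENNReal.tendsto_ofReal (tendsto_oneF1Coeff_ratio a b).norm
  rw [norm_zero, ENNReal.ofReal_zero] at hlim
  refine tendsto_of_tendsto_of_tendsto_of_le_of_le tendsto_const_nhds hlim
    (fun _ => zero_le) fun k => ENNReal.div_le_of_le_mul ?_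
  rw [Nat.succ_eq_add_one, oneF1Coeff_succ, mul_comm, norm_mul, ENNReal.ofReal_mul (norm_nonneg _)]

lemma oneF1_eq_sum_ofScalars (a b : ℝ) :
    oneF1 a b = (FormalMultilinearSeries.ofScalars ℝ (oneF1Coeff a b)).sum :=
  (FormalMultilinearSeries.ofScalarsSum_eq_tsum (E := ℝ) (oneF1Coeff a b)).symm

lemma continuous_oneF1 (a b : ℝ) : Continuous (oneF1 a b) := by
  have hseries := (FormalMultilinearSeries.ofScalars ℝ (oneF1Coeff a b)).continuousOn
  rw [radius_ofScalars_oneF1Coeff] at hseries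
  rw [oneF1_eq_sum_ofScalars]
  simpa using hseries

end ConfluentHypergeometric

theorem ordered_integral_det_general (m : ℕ) (x a b : ℝ) (hb : ∀ k : ℕ, b + k ≠ 0) (β α : ℕ)
    (θ : Fin m → ℝ) :
    (∫ y in {y : Fin m → ℝ | StrictMono y ∧ ∀ k, y k ∈ Set.Ioo 0 x},
        (∏ k, y k ^ β * (1 - y k) ^ α)
          * (∏ i : Fin m, ∏ j ∈ Finset.univ.filter (fun j => i < j), (y j - y i))
          * Matrix.det (Matrix.of fun i j : Fin m => oneF1 a b (θ j * y i)))
      = Matrix.det (Matrix.of fun i j : Fin m =>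
          ∫ y in Set.Ioc (0 : ℝ) x,
            y ^ (β + (i : ℕ)) * (1 - y) ^ α * oneF1 a b (θ j * y)) := by
  have hcont := continuous_oneF1 a b
  have hint (i j : Fin m) : IntegrableOn
      (fun t : ℝ => t ^ β * (1 - t) ^ α * t ^ (i : ℕ) * oneF1 a b (θ j * t)) (Set.Ioo 0 x) :=
    (Continuous.integrableOn_Icc (by fun_prop)).mono_set Set.Ioo_subset_Icc_self
  have hpow (i : ℕ) (t : ℝ) :
      t ^ (β + i) * (1 - t) ^ α = t ^ β * (1 - t) ^ α * t ^ i := by ring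
  simp only [integral_Ioc_eq_integral_Ioo, hpow, Finset.filter_lt_eq_Ioi,
    ← Matrix.det_vandermonde]
  exact setIntegral_strictMono_prod_mul_det_vandermonde_mul_det hint

/-- Evaluation, via the Andréief/Chiani identity, of the multiple ordered integral giving
`Pr{x_max ≤ x}` for the non-central F-matrix with distinct non-centrality eigenvalues:
the integral over `{0 < y₁ < ⋯ < y_m < x}` of
`∏ y_k^β (1−y_k)^α · ∏_{i<j}(y_j − y_i) · det[₁F₁(a;b;θ_j y_i)]`
equals `det[φ_i(x,θ_j)]` with `φ_i(x,θ_j) = ∫₀ˣ y^{β+i−1}(1−y)^α ₁F₁(a;b;θ_j y) dy`. -/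
theorem ordered_integral_det (m : ℕ) (hm : 1 ≤ m)
    (x : ℝ) (hx : x ∈ Set.Ioo (0 : ℝ) 1)
    (a b : ℝ) (hb : 0 < b) (β α : ℕ)
    (θ : Fin m → ℝ) (hθ : StrictMono θ) :
    (∫ y in {y : Fin m → ℝ | StrictMono y ∧ ∀ k, y k ∈ Set.Ioo 0 x},
        (∏ k, y k ^ β * (1 - y k) ^ α)
          * (∏ i : Fin m, ∏ j ∈ Finset.univ.filter (fun j => i < j), (y j - y i))
          * Matrix.det (Matrix.of fun i j : Fin m => oneF1 a b (θ j * y i)))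
      = Matrix.det (Matrix.of fun i j : Fin m =>
          ∫ y in Set.Ioc (0 : ℝ) x,
            y ^ (β + (i : ℕ)) * (1 - y) ^ α * oneF1 a b (θ j * y)) :=
  ordered_integral_det_general m x a b (fun k => by positivity) β α θ
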